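/- Let d ≥ 2 and let ρ : (0,∞) → [0,∞) be measurable with ∫_{ℝ^d} |k| ρ(|k|)² dk < ∞. Then for every v ∈ ℝ^d \ {0}, the integral of the matrix k⊗k against the weight ρ(|k|)² over the hyperplane v^⊥ (with respect to (d−1)-dimensional Lebesgue measure on v^⊥) is an explicit multiple of the orthogonal projection onto v^⊥: ∫_{v^⊥} (k ⊗ k) ρ(|k|)² dk = Λ · P_v^⊥, where Λ = (ω_{d−1}/(d ω_d)) ∫_{ℝ^d} |k| ρ(|k|)² dk and ω_n denotes the volume of the n-dimensional unit ball. -/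

import Mathlib

/-!
Put `n = d - 1`. Since `ι` is an isometry onto `v^⊥`, each `e` acts on `v^⊥` through its projection
`P_v^⊥ e = ι u`, so the left-hand side is `∫ ⟪y, u₁⟫ ⟪y, u₂⟫ ρ(|y|)² dy` over `ℝ^n`, and
`⟪u₁, u₂⟫ = ⟪P_v^⊥ e₁, e₂⟫`. The weight is invariant under sign changes and permutations of
coordinates, so its second-moment matrix is `(1/n) ∫ |y|² ρ(|y|)² dy` times the identity
(`integral_inner_mul_inner_radial`). In polar coordinates
`∫_{ℝ^n} |y|² ρ² = n ω_n ∫ r^{n+1} ρ² dr` and `∫_{ℝ^{n+1}} |k| ρ² = (n+1) ω_{n+1} ∫ r^{n+1} ρ² dr`,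
with the same radial integral (`integral_sq_radial`); the same comparison gives the integrability
needed to expand in coordinates (`integrable_sq_of_integrable`).
-/


open MeasureTheory Metric
open scoped InnerProductSpace

/-- In polar coordinates, `|k| g(|k|) dk` on `ℝ^{n+1}` and `|y|² g(|y|) dy` on `ℝ^n` have the same
radial density `r^{n+1} g(r) dr` up to a constant. -/
lemma integrable_sq_of_integrable {n : ℕ} (hn : n ≠ 0) (g : ℝ → ℝ)
    (h : Integrable (fun k : EuclideanSpace ℝ (Fin (n + 1)) => ‖k‖ * g ‖k‖)) :
    Integrable (fun y : EuclideanSpace ℝ (Fin n) => ‖y‖ ^ 2 * g ‖y‖) := by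
  have : Nonempty (Fin n) := ⟨⟨0, by omega⟩⟩
  rw [integrable_fun_norm_addHaar volume (f := fun r => r * g r)] at h
  rw [integrable_fun_norm_addHaar volume (f := fun r => r ^ 2 * g r)]
  refine h.congr_fun (fun r _ => ?_) measurableSet_Ioi
  obtain ⟨m, rfl⟩ := Nat.exists_eq_succ_of_ne_zero hn
  simp only [finrank_euclideanSpace, Fintype.card_fin, smul_eq_mul, Nat.succ_eq_add_one,
    Nat.add_sub_cancel]
  ring

lemma integral_sq_radial {n : ℕ} (hn : n ≠ 0) (g : ℝ → ℝ) :
    ∫ y : EuclideanSpace ℝ (Fin n), ‖y‖ ^ 2 * g ‖y‖ =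
      n * ((volume (ball (0 : EuclideanSpace ℝ (Fin n)) 1)).toReal
        / (((n + 1 : ℕ) : ℝ) * (volume (ball (0 : EuclideanSpace ℝ (Fin (n + 1))) 1)).toReal)
        * ∫ k : EuclideanSpace ℝ (Fin (n + 1)), ‖k‖ * g ‖k‖) := by
  have : Nonempty (Fin n) := ⟨⟨0, by omega⟩⟩
  have hω : (volume (ball (0 : EuclideanSpace ℝ (Fin (n + 1))) 1)).toReal ≠ 0 :=
    (ENNReal.toReal_pos (measure_ball_pos _ _ one_pos).ne' measure_ball_lt_top.ne).ne'
  rw [integral_fun_norm_addHaar volume (fun r => r * g r),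
    integral_fun_norm_addHaar volume (fun r => r ^ 2 * g r)]
  obtain ⟨m, rfl⟩ := Nat.exists_eq_succ_of_ne_zero hn
  simp only [finrank_euclideanSpace, Fintype.card_fin, smul_eq_mul, nsmul_eq_mul,
    Nat.succ_eq_add_one, Nat.add_sub_cancel, Measure.real]
  have hr : ∀ r : ℝ, r ^ (m + 1) * (r * g r) = r ^ m * (r ^ 2 * g r) := fun r => by ring
  simp only [hr]
  have : ((m + 1 + 1 : ℕ) : ℝ) ≠ 0 := by positivity
  field_simp

/-- Flipping the sign of the `i`-th coordinate preserves the radial weight and Lebesgue measure. -/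
lemma integral_coord_mul_coord_of_ne {n : ℕ} (g : ℝ → ℝ) {i j : Fin n} (hij : i ≠ j) :
    ∫ y : EuclideanSpace ℝ (Fin n), y i * y j * g ‖y‖ = 0 := by
  let L : EuclideanSpace ℝ (Fin n) ≃ₗᵢ[ℝ] EuclideanSpace ℝ (Fin n) :=
    LinearIsometryEquiv.piLpCongrRight 2 fun k =>
      if k = i then LinearIsometryEquiv.neg ℝ else LinearIsometryEquiv.refl ℝ ℝ
  have h := L.measurePreserving.integral_comp L.toHomeomorph.measurableEmbedding
    (fun y : EuclideanSpace ℝ (Fin n) => y i * y j * g ‖y‖)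
  have hi : ∀ y, L y i = - y i := fun y => by simp [L]
  have hj : ∀ y, L y j = y j := fun y => by simp [L, hij.symm]
  simp only [hi, hj, LinearIsometryEquiv.norm_map, neg_mul, integral_neg] at h
  linarith

/-- Swapping two coordinates preserves the radial weight and Lebesgue measure. -/
lemma integral_coord_sq_eq {n : ℕ} (g : ℝ → ℝ) (i j : Fin n) :
    ∫ y : EuclideanSpace ℝ (Fin n), y i * y i * g ‖y‖ =
      ∫ y : EuclideanSpace ℝ (Fin n), y j * y j * g ‖y‖ := by
  let L : EuclideanSpace ℝ (Fin n) ≃ₗᵢ[ℝ] EuclideanSpace ℝ (Fin n) :=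
    LinearIsometryEquiv.piLpCongrLeft 2 ℝ ℝ (Equiv.swap i j)
  have h := L.measurePreserving.integral_comp L.toHomeomorph.measurableEmbedding
    (fun y : EuclideanSpace ℝ (Fin n) => y j * y j * g ‖y‖)
  have hj : ∀ y, L y j = y i := fun y => by
    simp [L, LinearIsometryEquiv.piLpCongrLeft_apply, Equiv.piCongrLeft']
  simp only [hj, LinearIsometryEquiv.norm_map] at h
  exact h

lemma integrable_coord_mul_coord {n : ℕ} {g : ℝ → ℝ} (hg : Measurable g)
    (h : Integrable (fun y : EuclideanSpace ℝ (Fin n) => ‖y‖ ^ 2 * g ‖y‖)) (i j : Fin n) :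
    Integrable (fun y : EuclideanSpace ℝ (Fin n) => y i * y j * g ‖y‖) := by
  refine h.mono ?_ (ae_of_all _ fun y => ?_)
  · have : Measurable fun y : EuclideanSpace ℝ (Fin n) => y i * y j * g ‖y‖ := by fun_prop
    exact this.aestronglyMeasurable
  · rw [norm_mul, norm_mul, norm_mul, norm_pow, norm_norm, pow_two]
    gcongr
    · exact PiLp.norm_apply_le y i
    · exact PiLp.norm_apply_le y j

/-- Isotropy: the second-moment matrix of a radial weight on `ℝ^n` is scalar, and its trace is the
integral of `|y|²`. -/
lemma integral_inner_mul_inner_radial {n : ℕ} (hn : n ≠ 0) {g : ℝ → ℝ} (hg : Measurable g)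
    (h : Integrable (fun y : EuclideanSpace ℝ (Fin n) => ‖y‖ ^ 2 * g ‖y‖))
    (a b : EuclideanSpace ℝ (Fin n)) :
    ∫ y : EuclideanSpace ℝ (Fin n), ⟪y, a⟫_ℝ * ⟪y, b⟫_ℝ * g ‖y‖ =
      (∫ y : EuclideanSpace ℝ (Fin n), ‖y‖ ^ 2 * g ‖y‖) / n * ⟪a, b⟫_ℝ := by
  have hint := integrable_coord_mul_coord hg h
  have hdiag : ∀ i : Fin n, ∫ y : EuclideanSpace ℝ (Fin n), y i * y i * g ‖y‖ =
      (∫ y : EuclideanSpace ℝ (Fin n), ‖y‖ ^ 2 * g ‖y‖) / n := by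
    intro i
    have hsum : ∀ y : EuclideanSpace ℝ (Fin n),
        ‖y‖ ^ 2 * g ‖y‖ = ∑ j, y j * y j * g ‖y‖ := fun y => by
      rw [EuclideanSpace.real_norm_sq_eq, Finset.sum_mul]
      simp only [pow_two]
    rw [integral_congr_ae (ae_of_all _ hsum), integral_finsetSum _ fun j _ => hint j j,
      Finset.sum_congr rfl fun j _ => integral_coord_sq_eq g j i]
    have hn' : (n : ℝ) ≠ 0 := Nat.cast_ne_zero.mpr hn
    simp only [Finset.sum_const, Finset.card_univ, Fintype.card_fin, nsmul_eq_mul]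
    field_simp
  have hexp : ∀ y : EuclideanSpace ℝ (Fin n), ⟪y, a⟫_ℝ * ⟪y, b⟫_ℝ * g ‖y‖ =
      ∑ i, ∑ j, a i * b j * (y i * y j * g ‖y‖) := fun y => by
    simp only [PiLp.inner_apply, Real.inner_apply]
    rw [Finset.sum_mul_sum]
    simp only [Finset.sum_mul]
    exact Finset.sum_congr rfl fun i _ => Finset.sum_congr rfl fun j _ => by ring
  rw [integral_congr_ae (ae_of_all _ hexp), integral_finsetSum _ fun i _ =>
    integrable_finsetSum _ fun j _ => (hint i j).const_mul _, PiLp.inner_apply, Finset.mul_sum]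
  refine Finset.sum_congr rfl fun i _ => ?_
  rw [integral_finsetSum _ fun j _ => (hint i j).const_mul _, Finset.sum_eq_single i]
  · rw [integral_const_mul, hdiag, Real.inner_apply]
    ring
  · intro j _ hji
    rw [integral_const_mul, integral_coord_mul_coord_of_ne g hji.symm, mul_zero]
  · simp

/-- **Explicit computation of the Landau kernel.**
For `d ≥ 2` and a measurable radial profile `ρ ≥ 0` with `∫ |k| ρ(|k|)² dk < ∞`,
the integral of `k ⊗ k · ρ(|k|)²` over the hyperplane `v^⊥` (identified with
`ℝ^{d-1}` through any linear isometry `ι` with range `v^⊥`, which carries the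
(d−1)-dimensional Lebesgue measure) equals `Λ • P_v^⊥`, tested against arbitrary
vectors `e₁, e₂`, with `Λ = (ω_{d-1}/(d ω_d)) ∫ |k| ρ(|k|)² dk`. -/
theorem landau_kernel_computation
    (d : ℕ) (hd : 2 ≤ d) (ρ : ℝ → ℝ)
    (hρmeas : Measurable ρ) (hρnonneg : ∀ r : ℝ, 0 ≤ ρ r)
    (hint : Integrable (fun k : EuclideanSpace ℝ (Fin d) => ‖k‖ * ρ ‖k‖ ^ 2))
    (v : EuclideanSpace ℝ (Fin d)) (hv : v ≠ 0)
    (ι : EuclideanSpace ℝ (Fin (d - 1)) →ₗᵢ[ℝ] EuclideanSpace ℝ (Fin d))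
    (hι : LinearMap.range ι.toLinearMap = (Submodule.span ℝ {v})ᗮ)
    (e₁ e₂ : EuclideanSpace ℝ (Fin d)) :
    (∫ y : EuclideanSpace ℝ (Fin (d - 1)), ⟪ι y, e₁⟫_ℝ * ⟪ι y, e₂⟫_ℝ * ρ ‖ι y‖ ^ 2)
      = ((volume (ball (0 : EuclideanSpace ℝ (Fin (d - 1))) 1)).toReal
            / ((d : ℝ) * (volume (ball (0 : EuclideanSpace ℝ (Fin d)) 1)).toReal)
          * ∫ k : EuclideanSpace ℝ (Fin d), ‖k‖ * ρ ‖k‖ ^ 2)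
        * ⟪e₁ - (⟪v, e₁⟫_ℝ / ‖v‖ ^ 2) • v, e₂⟫_ℝ := by
  revert ι
  generalize hdn : d - 1 = n
  intro ι hι
  obtain rfl : d = n + 1 := by omega
  have hn : n ≠ 0 := by omega
  have hv2 : ‖v‖ ^ 2 ≠ 0 := by positivity
  -- `ι y` is orthogonal to `v`, so `e` may be replaced by its projection onto `v^⊥`, which is `ι u`.
  have key : ∀ e : EuclideanSpace ℝ (Fin (n + 1)), ∃ u : EuclideanSpace ℝ (Fin n),
      ι u = e - (⟪v, e⟫_ℝ / ‖v‖ ^ 2) • v ∧ ∀ y, ⟪ι y, e⟫_ℝ = ⟪y, u⟫_ℝ := by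
    intro e
    have hmem : e - (⟪v, e⟫_ℝ / ‖v‖ ^ 2) • v ∈ LinearMap.range ι.toLinearMap := by
      rw [hι, Submodule.mem_orthogonal_singleton_iff_inner_right, inner_sub_right,
        real_inner_smul_right, real_inner_self_eq_norm_sq]
      field_simp
      ring
    obtain ⟨u, hu⟩ := hmem
    have hu' : ι u = e - (⟪v, e⟫_ℝ / ‖v‖ ^ 2) • v := hu
    refine ⟨u, hu', fun y => ?_⟩
    have hy : ⟪ι y, v⟫_ℝ = 0 := by
      rw [← Submodule.mem_orthogonal_singleton_iff_inner_left, ← hι]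
      exact ⟨y, rfl⟩
    rw [← ι.inner_map_map, hu', inner_sub_right, real_inner_smul_right, hy]
    ring
  obtain ⟨u₁, hu₁, h₁⟩ := key e₁
  obtain ⟨u₂, -, h₂⟩ := key e₂
  rw [← hu₁, h₂]
  simp only [h₁, h₂, LinearIsometry.norm_map]
  have hI := integrable_sq_of_integrable hn (fun r => ρ r ^ 2) hint
  have hR := integral_sq_radial hn (fun r => ρ r ^ 2)
  rw [integral_inner_mul_inner_radial hn (hρmeas.pow_const 2) hI, hR]
  have hn' : (n : ℝ) ≠ 0 := Nat.cast_ne_zero.mpr hn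
  field_simp
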